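/- For every integer d ≥ 1, every natural number k, and every real m ∈ [−1, 1], it holds that 0 ≤ |m| − m·g_d^{(k)}(m) ≤ |m|·(1 − |m|)^{(p_d)^k}, where the exponentiation is the real power with exponent (p_d)^k. -/

import Mathlib

noncomputable def g (d : ℕ) : ℝ → ℝ :=
  fun m => ∑ i ∈ Finset.range (d + 1),
    (1 / 4 ^ i : ℝ) * (Nat.choose (2 * i) i) * (m * (1 - m ^ 2) ^ i)

noncomputable def p (d : ℕ) : ℝ :=
  ∑ i ∈ Finset.range (d + 1), (1 / 4 ^ i : ℝ) * (Nat.choose (2 * i) i)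

/-!
The derivative of `g d` is `p d * (1 - x ^ 2) ^ d`. Hence, for `c = p d`, the function
`(1 - x) ^ c - (1 - g d x)`, which vanishes at `0` and at `1`, has derivative
`c * (1 - x) ^ (c - 1) * ((1 + x) ^ d * (1 - x) ^ (d + 1 - c) - 1)` on `(0, 1)`. As `c ≤ d + 1`,
the product `(1 + x) ^ d * (1 - x) ^ (d + 1 - c)` is log-concave with value `1` at `0`, so the
derivative changes sign at most once, from nonnegative to negative, and the function is
nonnegative on `[0, 1]`. The bound `1 - g d x ≤ (1 - x) ^ c` then iterates, because `g d` preserves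
`[0, 1]`, and it extends to negative arguments because `g d` is odd.
-/

open Set

lemma min_le_of_hasDerivAt_of_sign_change {f f' : ℝ → ℝ} {a b x : ℝ}
    (hf : ContinuousOn f (Icc a b)) (hf' : ∀ y ∈ Ioo a b, HasDerivAt f (f' y) y)
    (hsign : ∀ ⦃y z⦄, a < y → y ≤ z → z < b → 0 ≤ f' z → 0 ≤ f' y) (hx : x ∈ Icc a b) :
    min (f a) (f b) ≤ f x := by
  rcases hx.1.eq_or_lt with rfl | hax
  · exact min_le_left _ _
  rcases hx.2.eq_or_lt with rfl | hxb
  · exact min_le_right _ _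
  rcases le_or_gt 0 (f' x) with hpos | hneg
  · have hmono : MonotoneOn f (Icc a x) := by
      refine monotoneOn_of_hasDerivWithinAt_nonneg (f' := f') (convex_Icc a x)
        (hf.mono (Icc_subset_Icc_right hx.2)) ?_ ?_ <;> rw [interior_Icc] <;> intro y hy
      · exact (hf' y ⟨hy.1, hy.2.trans hxb⟩).hasDerivWithinAt
      · exact hsign hy.1 hy.2.le hxb hpos
    exact (min_le_left _ _).trans (hmono (left_mem_Icc.2 hx.1) (right_mem_Icc.2 hx.1) hx.1)
  · have hanti : AntitoneOn f (Icc x b) := by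
      refine antitoneOn_of_hasDerivWithinAt_nonpos (f' := f') (convex_Icc x b)
        (hf.mono (Icc_subset_Icc_left hx.1)) ?_ ?_ <;> rw [interior_Icc] <;> intro y hy
      · exact (hf' y ⟨hax.trans hy.1, hy.2⟩).hasDerivWithinAt
      · exact le_of_not_ge fun hy' ↦ hneg.not_ge (hsign hax hy.1.le hy.2 hy')
    exact (min_le_right _ _).trans (hanti (left_mem_Icc.2 hx.2) (right_mem_Icc.2 hx.2) hx.2)

lemma one_le_one_add_rpow_mul_one_sub_rpow_of_le {a b x y : ℝ} (ha : 0 ≤ a) (hb : 0 ≤ b)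
    (hx : 0 ≤ x) (hxy : x ≤ y) (hy : y ≤ 1) (h : 1 ≤ (1 + y) ^ a * (1 - y) ^ b) :
    1 ≤ (1 + x) ^ a * (1 - x) ^ b := by
  rcases hx.eq_or_lt with rfl | hx
  · simp
  have hy₀ : 0 < y := hx.trans_le hxy
  have hadd : 0 ≤ 1 + y := by linarith
  have hsub : 0 ≤ 1 - y := by linarith
  -- Log-concavity between `0` and `y` is Bernoulli's inequality for the exponent `t = x / y ≤ 1`.
  obtain ⟨t, ht₀, ht₁, rfl⟩ : ∃ t, 0 ≤ t ∧ t ≤ 1 ∧ x = t * y :=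
    ⟨x / y, by positivity, div_le_one_of_le₀ hxy hy₀.le, by field_simp⟩
  have hadd_t : (1 + y) ^ t ≤ 1 + t * y :=
    rpow_one_add_le_one_add_mul_self (by linarith) ht₀ ht₁
  have hsub_t : (1 - y) ^ t ≤ 1 - t * y := by
    simpa only [sub_eq_add_neg, mul_neg] using
      rpow_one_add_le_one_add_mul_self (s := -y) (by linarith) ht₀ ht₁
  calc 1 ≤ ((1 + y) ^ a * (1 - y) ^ b) ^ t := Real.one_le_rpow h ht₀
    _ = ((1 + y) ^ t) ^ a * ((1 - y) ^ t) ^ b := by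
      rw [Real.mul_rpow (by positivity) (by positivity), ← Real.rpow_mul hadd, mul_comm a,
        Real.rpow_mul hadd, ← Real.rpow_mul hsub, mul_comm b, Real.rpow_mul hsub]
    _ ≤ (1 + t * y) ^ a * (1 - t * y) ^ b := by gcongr

lemma one_sub_iterate_le_rpow {f : ℝ → ℝ} {c x : ℝ} (hc : 0 ≤ c)
    (hf : MapsTo f (Icc 0 1) (Icc 0 1)) (hle : ∀ y ∈ Icc (0 : ℝ) 1, 1 - f y ≤ (1 - y) ^ c)
    (hx : x ∈ Icc (0 : ℝ) 1) (k : ℕ) : 1 - f^[k] x ≤ (1 - x) ^ (c ^ k) := by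
  induction k with
  | zero => simp
  | succ k ih =>
    have hmem : f^[k] x ∈ Icc (0 : ℝ) 1 := hf.iterate k hx
    calc 1 - f^[k + 1] x = 1 - f (f^[k] x) := by rw [Function.iterate_succ_apply']
      _ ≤ (1 - f^[k] x) ^ c := hle _ hmem
      _ ≤ ((1 - x) ^ (c ^ k)) ^ c := Real.rpow_le_rpow (sub_nonneg.2 hmem.2) ih hc
      _ = (1 - x) ^ (c ^ (k + 1)) := by rw [← Real.rpow_mul (sub_nonneg.2 hx.2), pow_succ]

lemma odd_iterate {α : Type*} [Neg α] {f : α → α} (hf : Function.Odd f) (k : ℕ) :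
    Function.Odd f^[k] :=
  Function.Commute.iterate_left (g := Neg.neg) hf k

lemma even_apply_abs {α β : Type*} [AddGroup α] [LinearOrder α] {f : α → β}
    (hf : Function.Even f) (x : α) : f |x| = f x := by
  rcases abs_choice x with h | h <;> rw [h]
  exact hf x

/-- The coefficient `4⁻ⁱ C(2i, i)` of `zⁱ` in the Taylor series of `(1 - z) ^ (-1/2)`: the common
coefficients of the sums `p d` and `g d`. -/
noncomputable def invSqrtCoeff (i : ℕ) : ℝ := (1 / 4 ^ i : ℝ) * (Nat.choose (2 * i) i)

lemma invSqrtCoeff_pos (i : ℕ) : 0 < invSqrtCoeff i :=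
  mul_pos (by positivity) (mod_cast Nat.centralBinom_pos i)

lemma invSqrtCoeff_le_one (i : ℕ) : invSqrtCoeff i ≤ 1 := by
  rw [invSqrtCoeff, one_div_mul_eq_div, div_le_one (by positivity)]
  exact_mod_cast Nat.centralBinom_le_four_pow i

lemma two_mul_succ_mul_invSqrtCoeff_succ (i : ℕ) :
    2 * ((i : ℝ) + 1) * invSqrtCoeff (i + 1) = (2 * i + 1) * invSqrtCoeff i := by
  have hbinom : ((i : ℝ) + 1) * Nat.choose (2 * (i + 1)) (i + 1) =
      2 * (2 * i + 1) * Nat.choose (2 * i) i := mod_cast Nat.succ_mul_centralBinom_succ i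
  simp only [invSqrtCoeff, pow_succ]
  field_simp
  linear_combination 2 * hbinom

lemma p_zero : p 0 = 1 := by simp [p]

lemma p_succ (d : ℕ) : p (d + 1) = p d + invSqrtCoeff (d + 1) :=
  Finset.sum_range_succ ..

lemma p_eq_mul_invSqrtCoeff_succ (d : ℕ) : p d = 2 * (d + 1) * invSqrtCoeff (d + 1) := by
  rw [two_mul_succ_mul_invSqrtCoeff_succ]
  induction d with
  | zero => simp [p, invSqrtCoeff]
  | succ d ih =>
    rw [p_succ, ih, ← two_mul_succ_mul_invSqrtCoeff_succ]
    push_cast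
    ring

lemma p_pos (d : ℕ) : 0 < p d :=
  Finset.sum_pos (fun i _ ↦ invSqrtCoeff_pos i) Finset.nonempty_range_add_one

lemma p_le_add_one (d : ℕ) : p d ≤ d + 1 :=
  calc p d ≤ ∑ _i ∈ Finset.range (d + 1), (1 : ℝ) :=
        Finset.sum_le_sum fun i _ ↦ invSqrtCoeff_le_one i
    _ = d + 1 := by simp

lemma g_succ (d : ℕ) (x : ℝ) :
    g (d + 1) x = g d x + invSqrtCoeff (d + 1) * (x * (1 - x ^ 2) ^ (d + 1)) :=
  Finset.sum_range_succ ..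

lemma g_zero (x : ℝ) : g 0 x = x := by simp [g]

lemma g_apply_one (d : ℕ) : g d 1 = 1 := by
  induction d with
  | zero => exact g_zero 1
  | succ d ih => simp [g_succ, ih]

lemma odd_g (d : ℕ) : Function.Odd (g d) := fun x ↦ by
  simp [g]

lemma hasDerivAt_g (d : ℕ) (x : ℝ) : HasDerivAt (g d) (p d * (1 - x ^ 2) ^ d) x := by
  induction d with
  | zero => simpa [funext g_zero, p_zero] using hasDerivAt_id' x
  | succ d ih =>
    have hsq : HasDerivAt (fun x : ℝ ↦ 1 - x ^ 2) (-(2 * x)) x := by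
      simpa using (hasDerivAt_pow 2 x).const_sub 1
    rw [funext (g_succ d)]
    refine (ih.fun_add (((hasDerivAt_id' x).fun_mul (hsq.fun_pow (d + 1))).const_mul
      (invSqrtCoeff (d + 1)))).congr_deriv ?_
    rw [p_succ, p_eq_mul_invSqrtCoeff_succ]
    push_cast
    ring

lemma continuous_g (d : ℕ) : Continuous (g d) :=
  continuous_iff_continuousAt.2 fun x ↦ (hasDerivAt_g d x).continuousAt

lemma monotoneOn_g (d : ℕ) : MonotoneOn (g d) (Icc 0 1) := by
  refine monotoneOn_of_hasDerivWithinAt_nonneg (convex_Icc 0 1) (continuous_g d).continuousOn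
    (fun x _ ↦ (hasDerivAt_g d x).hasDerivWithinAt) fun x hx ↦ ?_
  have hx := interior_subset hx
  have : 0 ≤ 1 - x ^ 2 := sub_nonneg.2 (pow_le_one₀ hx.1 hx.2)
  exact mul_nonneg (p_pos d).le (pow_nonneg this d)

lemma mapsTo_g (d : ℕ) : MapsTo (g d) (Icc 0 1) (Icc 0 1) := by
  simpa only [(odd_g d).map_zero, g_apply_one] using (monotoneOn_g d).mapsTo_Icc

lemma hasDerivAt_rpow_sub_one_sub_g (d : ℕ) {x : ℝ} (hx : x < 1) :
    HasDerivAt (fun y ↦ (1 - y) ^ p d - (1 - g d y))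
      (p d * (1 - x) ^ (p d - 1) * ((1 + x) ^ (d : ℝ) * (1 - x) ^ (d + 1 - p d) - 1)) x := by
  have hsub : 0 < 1 - x := sub_pos.2 hx
  refine ((((hasDerivAt_id' x).const_sub 1).rpow_const (.inl hsub.ne')).fun_sub
    ((hasDerivAt_g d x).const_sub 1)).congr_deriv ?_
  have hfactor : (1 - x ^ 2) ^ d =
      (1 - x) ^ (p d - 1) * ((1 + x) ^ (d : ℝ) * (1 - x) ^ (d + 1 - p d)) := by
    rw [mul_left_comm, ← Real.rpow_add hsub, show p d - 1 + (d + 1 - p d) = (d : ℝ) by ring,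
      Real.rpow_natCast, Real.rpow_natCast, ← mul_pow]
    ring
  rw [hfactor]
  ring

lemma one_sub_g_le_rpow (d : ℕ) {x : ℝ} (hx : x ∈ Icc (0 : ℝ) 1) :
    1 - g d x ≤ (1 - x) ^ p d := by
  have hcont : Continuous fun y ↦ (1 - y) ^ p d - (1 - g d y) :=
    ((continuous_const.sub continuous_id).rpow_const fun _ ↦ .inr (p_pos d).le).sub
      (continuous_const.sub (continuous_g d))
  have hmin := min_le_of_hasDerivAt_of_sign_change hcont.continuousOn
    (fun y hy ↦ hasDerivAt_rpow_sub_one_sub_g d hy.2) ?_ hx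
  · simpa [(odd_g d).map_zero, g_apply_one, Real.zero_rpow (p_pos d).ne'] using hmin
  intro y z hy hyz hz
  have hfactor {w : ℝ} (hw : w < 1) : 0 < p d * (1 - w) ^ (p d - 1) :=
    mul_pos (p_pos d) (Real.rpow_pos_of_pos (sub_pos.2 hw) _)
  rw [mul_nonneg_iff_of_pos_left (hfactor hz), mul_nonneg_iff_of_pos_left
    (hfactor (hyz.trans_lt hz)), sub_nonneg, sub_nonneg]
  exact one_le_one_add_rpow_mul_one_sub_rpow_of_le d.cast_nonneg
    (sub_nonneg.2 (p_le_add_one d)) hy.le hyz hz.le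

theorem stmt_11 (d : ℕ) (hd : 1 ≤ d) (k : ℕ) (m : ℝ) (hm : m ∈ Set.Icc (-1 : ℝ) 1) :
    0 ≤ |m| - m * (g d)^[k] m ∧ |m| - m * (g d)^[k] m ≤ |m| * (1 - |m|) ^ (p d ^ k) := by
  have hmem : |m| ∈ Icc (0 : ℝ) 1 := ⟨abs_nonneg m, abs_le.2 hm⟩
  have heven : Function.Even fun x ↦ x * (g d)^[k] x :=
    Function.Odd.mul_odd (fun _ ↦ rfl) (odd_iterate (odd_g d) k)
  have hfactor : |m| - m * (g d)^[k] m = |m| * (1 - (g d)^[k] |m|) := by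
    rw [← even_apply_abs heven m]
    ring
  rw [hfactor]
  have hiter : (g d)^[k] |m| ≤ 1 := ((mapsTo_g d).iterate k hmem).2
  have hbound : 1 - (g d)^[k] |m| ≤ (1 - |m|) ^ (p d ^ k) :=
    one_sub_iterate_le_rpow (p_pos d).le (mapsTo_g d) (fun _ ↦ one_sub_g_le_rpow d) hmem k
  exact ⟨mul_nonneg hmem.1 (sub_nonneg.2 hiter), mul_le_mul_of_nonneg_left hbound hmem.1⟩
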